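/- For every integer k ≥ 2 the following double-factorial identity holds: −272·(4k−1)!!/(4^k·k!·(k+1)!) + 1193·(4k−5)!!/(4^{k−1}·(k−1)!·k!) − 2960·(4k−3)!!/(4^k·k!·(k+1)!) − 539·(4k−7)!!/(4^{k−1}·(k−1)!·k!) = 105·(4k−7)!!·(k−2)·(k−3)·(k−4)/(4^{k−2}·k!·(k+1)!). -/

import Mathlib

/-!
By `n‼ = n · (n - 2)‼`, each double factorial in the identity is `(4k - 7)‼` times a product of at
most three of the factors `4k - 5`, `4k - 3`, `4k - 1`. After multiplying by `4^k k! (k+1)!` and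
dividing by `(4k - 7)‼`, what remains is the polynomial identity
`-272 (4k-1)(4k-3)(4k-5) + 4772 k(k+1)(4k-5) - 2960 (4k-3)(4k-5) - 2156 k(k+1)
  = 1680 (k-2)(k-3)(k-4)`.
Writing `k = n + 2` removes all truncated subtractions.
-/


/-- The double-factorial identity showing positivity of the coefficients `d_{k+1}` in
the small-amplitude expansion of the second Melnikov function. -/
theorem double_factorial_identity : ∀ k : ℕ, 2 ≤ k →
    -272 * ((4*k-1).doubleFactorial : ℝ) / (4^k * (k.factorial : ℝ) * ((k+1).factorial : ℝ))
      + 1193 * ((4*k-5).doubleFactorial : ℝ) /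
          (4^(k-1) * ((k-1).factorial : ℝ) * (k.factorial : ℝ))
      - 2960 * ((4*k-3).doubleFactorial : ℝ) /
          (4^k * (k.factorial : ℝ) * ((k+1).factorial : ℝ))
      - 539 * ((4*k-7).doubleFactorial : ℝ) /
          (4^(k-1) * ((k-1).factorial : ℝ) * (k.factorial : ℝ))
    = 105 * ((4*k-7).doubleFactorial : ℝ) * ((k:ℝ) - 2) * ((k:ℝ) - 3) * ((k:ℝ) - 4) /
        (4^(k-2) * (k.factorial : ℝ) * ((k+1).factorial : ℝ)) := by
  intro k hk
  obtain ⟨n, rfl⟩ : ∃ n, k = n + 2 := ⟨k - 2, by omega⟩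
  have e1 : 4 * (n + 2) - 1 = 4 * n + 1 + 2 + 2 + 2 := by omega
  have e3 : 4 * (n + 2) - 3 = 4 * n + 1 + 2 + 2 := by omega
  have e5 : 4 * (n + 2) - 5 = 4 * n + 1 + 2 := by omega
  have e7 : 4 * (n + 2) - 7 = 4 * n + 1 := by omega
  have s1 : n + 2 - 1 = n + 1 := by omega
  have s2 : n + 2 - 2 = n := by omega
  rw [e1, e3, e5, e7, s1, s2]
  simp only [Nat.doubleFactorial_add_two, Nat.factorial_succ, pow_succ]
  have hf : (n.factorial : ℝ) ≠ 0 := by exact_mod_cast n.factorial_ne_zero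
  push_cast
  generalize ((4 * n + 1).doubleFactorial : ℝ) = d
  have h1 : (n : ℝ) + 1 ≠ 0 := by positivity
  have h2 : (n : ℝ) + 1 + 1 ≠ 0 := by positivity
  have h2' : (n : ℝ) + 2 ≠ 0 := by positivity
  have h3 : (n : ℝ) + 2 + 1 ≠ 0 := by positivity
  field_simp
  ring
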